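/- Let d ≥ 1, λ, η : Fin d → ℝ nonnegative with Σλ = Ση = 1, θ : Fin d × Fin d → ℝ, and j, j' ∈ Fin d. Let φ^{(j,j')} ∈ ℂ^d ⊗ ℂ^d have components √(λ_m η_{m'})·exp(−i[(2π/d²)(dj + j')(dm + m') + θ_{mm'}]). Define the diagonal unitaries U_a^{(j')} on ℂ^d by U_a^{(j')} e_m = exp(i(2π/d) j' m) e_m and U_b^{(j,j')} on ℂ^d by U_b^{(j,j')} e_{m'} = exp(i(2π/d²)(dj + j') m') e_{m'}. Then (U_a^{(j')} ⊗ U_b^{(j,j')}) φ^{(j,j')} = F, where F ∈ ℂ^d ⊗ ℂ^d has components F_{mm'} = exp(−iθ_{mm'})·√(λ_m η_{m'}); in particular the resulting state F is independent of the measurement outcome (j, j'). -/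

import Mathlib

open Matrix Kronecker

/-- The correction step of the RPBES protocol: after outcome `(j,j')`, the shared
state of Alice and Bob is `φ^{(j,j')}` with components
`√(λ_m η_{m'}) exp(−i[(2π/d²)(dj + j')(dm + m') + θ_{mm'}])`.  Applying the diagonal
unitaries `U_a^{(j')} e_m = e^{i(2π/d) j' m} e_m` (Alice) and
`U_b^{(j,j')} e_{m'} = e^{i(2π/d²)(dj + j') m'} e_{m'}` (Bob) yields the vector `F`
with components `F_{mm'} = e^{−iθ_{mm'}} √(λ_m η_{m'})`, independent of `(j, j')`. -/
theorem correction_step_yields_outcome_independent_state (d : ℕ) (hd : 1 ≤ d)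
    (l e : Fin d → ℝ) (hl : ∀ k, 0 ≤ l k) (he : ∀ k, 0 ≤ e k)
    (hl1 : ∑ k, l k = 1) (he1 : ∑ k, e k = 1)
    (θ : Fin d × Fin d → ℝ) (j j' : Fin d)
    (φ : Fin d × Fin d → ℂ)
    (hφ : ∀ m m', φ (m, m') =
      ((Real.sqrt (l m * e m') : ℝ) : ℂ) *
        Complex.exp (-(Complex.I *
          (((2 * Real.pi / (d : ℝ) ^ 2) * ((d : ℝ) * (j : ℕ) + (j' : ℕ)) *
            ((d : ℝ) * (m : ℕ) + (m' : ℕ)) + θ (m, m') : ℝ) : ℂ))))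
    (Ua Ub : Matrix (Fin d) (Fin d) ℂ)
    (hUa : Ua = Matrix.diagonal fun m : Fin d =>
      Complex.exp (Complex.I * (((2 * Real.pi / (d : ℝ)) * (j' : ℕ) * (m : ℕ) : ℝ) : ℂ)))
    (hUb : Ub = Matrix.diagonal fun m' : Fin d =>
      Complex.exp (Complex.I * (((2 * Real.pi / (d : ℝ) ^ 2) *
        ((d : ℝ) * (j : ℕ) + (j' : ℕ)) * (m' : ℕ) : ℝ) : ℂ))) :
    (Ua ⊗ₖ Ub).mulVec φ = fun p : Fin d × Fin d =>
      Complex.exp (-(Complex.I * ((θ p : ℝ) : ℂ))) *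
        ((Real.sqrt (l p.1 * e p.2) : ℝ) : ℂ) := by
  subst hUa hUb
  have hd0 : (d : ℂ) ≠ 0 := by
    exact_mod_cast (by omega : d ≠ 0)
  funext p
  obtain ⟨m, m'⟩ := p
  rw [Matrix.diagonal_kronecker_diagonal, Matrix.mulVec_diagonal, hφ, ← Complex.exp_add,
    mul_left_comm, ← Complex.exp_add, mul_comm]
  congr 1
  rw [Complex.exp_eq_exp_iff_exists_int]
  refine ⟨-((j : ℕ) * (m : ℕ) : ℤ), ?_⟩
  push_cast
  field_simp
  ring
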